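/- Let q := |det A| ≥ 2, let 𝔇 be a digit set for B, and let Φ = {φ₀,…,φ_{q−1}} ⊆ ℓ²(ℤ_N²). Then 𝔅(Φ) = {T_{Āk} φ_p : k ∈ 𝔇, 0 ≤ p ≤ q−1} is an orthonormal basis of ℓ²(ℤ_N²) if and only if for every k ∈ (ℤ/Nℤ)² and every pair (p₁,p₂) with 0 ≤ p₁ ≤ p₂ ≤ q−1 one has Σ_{γ ∈ C̄((ℤ/Nℤ)²)} φ̂_{p₁}(k+γ)·conj(φ̂_{p₂}(k+γ)) = q·δ_{p₁p₂}. -/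

import Mathlib

/-- The map on `(ℤ/Nℤ)²` induced by matrix–vector multiplication (mod `N`)
by an integer matrix `M`. -/
def matBar (N : ℕ) (M : Matrix (Fin 2) (Fin 2) ℤ) :
    (Fin 2 → ZMod N) → (Fin 2 → ZMod N) :=
  fun v => (M.map (Int.cast : ℤ → ZMod N)).mulVec v

/-- `D` is a set of coset representatives for `B̄((ℤ/Nℤ)²)` in `(ℤ/Nℤ)²`
containing `0`: it contains exactly one representative of each coset. -/
def IsDigitRep (N : ℕ) (B : Matrix (Fin 2) (Fin 2) ℤ)
    (D : Finset (Fin 2 → ZMod N)) : Prop :=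
  (0 : Fin 2 → ZMod N) ∈ D ∧
    ∀ v : Fin 2 → ZMod N, ∃! d, d ∈ D ∧ v - d ∈ Set.range (matBar N B)

/-- The translation operator `T_k` on `ℓ²(ℤ_N²)`: `(T_k f)(m) = f(m − k)`. -/
def transl (N : ℕ) (k : Fin 2 → ZMod N) (f : (Fin 2 → ZMod N) → ℂ) :
    (Fin 2 → ZMod N) → ℂ :=
  fun m => f (m - k)

/-- The discrete Fourier transform on `ℓ²(ℤ_N²)`:
`f̂(m) = Σ_s f(s)·e^{−2πi⟨m,s⟩/N}`, computed with integer lifts in the exponent. -/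
noncomputable def dft (N : ℕ) [NeZero N] (f : (Fin 2 → ZMod N) → ℂ)
    (m : Fin 2 → ZMod N) : ℂ :=
  ∑ s : Fin 2 → ZMod N, f s *
    Complex.exp (-(2 * Real.pi * Complex.I) *
      ((∑ i, ((m i).val : ℤ) * ((s i).val : ℤ) : ℤ) : ℂ) / (N : ℂ))

/-- The inner product on `ℓ²(ℤ_N²)`: `⟨f, g⟩ = Σ_n f(n)·conj(g(n))`. -/
noncomputable def ip (N : ℕ) [NeZero N] (f g : (Fin 2 → ZMod N) → ℂ) : ℂ :=
  ∑ n : Fin 2 → ZMod N, f n * (starRingEnd ℂ) (g n)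

/-- A family `b` indexed by `ι` is an orthonormal basis of `ℓ²(ℤ_N²)`:
it is orthonormal and spans the whole space. -/
def IsONB (N : ℕ) [NeZero N] {ι : Type*} [Fintype ι] [DecidableEq ι]
    (b : ι → ((Fin 2 → ZMod N) → ℂ)) : Prop :=
  (∀ i j, ip N (b i) (b j) = if i = j then 1 else 0) ∧
    Submodule.span ℂ (Set.range b) = ⊤

/-!
The product `f̂(χ) * conj (ĝ(χ))` is the Fourier series in `χ` of the correlations
`a ↦ ⟪g, τ a f⟫`. Summing it over a coset of the annihilator `H^⊥` of a subgroup `H` kills, by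
orthogonality of the characters of `G ⧸ H`, all correlations except those at `a ∈ H`. By uniqueness
of Fourier coefficients the resulting sums all equal `[G : H] * z` exactly when the correlation is
`z` at `0` and vanishes on `H` elsewhere. Taking `z = δ_{p₁p₂}` gives orthonormality of the
`H`-translates; completeness is then a dimension count.

Here `H` is the range of `Ā`. As `A * B = N`, the kernel of `Ā` is the range of `B̄`, so a digit set
parametrizes `H`; the kernel of `Āᵀ` is the range of `B̄ᵀ`, so the latter is `H^⊥` under the duality
`(m, s) ↦ exp(2πi⟨m, s⟩/N)`; and `H` has index `|det A|`.
-/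

open Finset Matrix
open scoped RCLike ComplexConjugate translate

section OrthonormalBasis

variable {G ι κ : Type*} [Fintype G] [DecidableEq ι]

/-- Orthonormal bases of `ℓ²(G)`, viewed as families of plain functions `G → ℂ` with the inner
product `⟪f, g⟫_[ℂ] = ∑ x, conj (f x) * g x`. -/
def IsOrthonormalBasis (b : ι → G → ℂ) : Prop :=
  (∀ i j, ⟪b i, b j⟫_[ℂ] = if i = j then 1 else 0) ∧ Submodule.span ℂ (Set.range b) = ⊤

lemma isOrthonormalBasis_iff_of_card_eq [Fintype ι] (hcard : Fintype.card ι = Fintype.card G)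
    (b : ι → G → ℂ) :
    IsOrthonormalBasis b ↔ ∀ i j, ⟪b i, b j⟫_[ℂ] = if i = j then 1 else 0 := by
  refine ⟨And.left, fun hb => ⟨hb, ?_⟩⟩
  have hne : ∀ i, b i ≠ 0 := fun i hi => by simpa [hi] using hb i i
  have hlin : LinearIndependent ℂ b :=
    RCLike.linearIndependent_of_ne_zero_of_wInner_one_eq_zero hne
      fun i j hij => (hb i j).trans (if_neg hij)
  exact hlin.span_eq_top_of_card_eq_finrank' (by simpa using hcard)

lemma isOrthonormalBasis_comp_equiv [DecidableEq κ] (e : κ ≃ ι) (b : ι → G → ℂ) :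
    IsOrthonormalBasis (b ∘ e) ↔ IsOrthonormalBasis b := by
  simp only [IsOrthonormalBasis, e.surjective.range_comp, Function.comp_apply,
    e.surjective.forall, e.injective.eq_iff]

end OrthonormalBasis

section Bracket

variable {G : Type*} [AddCommGroup G] [Fintype G] (H : AddSubgroup G)

open Classical in
/-- The annihilator `H^⊥`: the characters of `G` that are trivial on `H`. -/
noncomputable def charAnnihilator : Finset (AddChar G ℂ) :=
  {χ | ∀ h ∈ H, χ h = 1}

variable {H} in
lemma mem_charAnnihilator {χ : AddChar G ℂ} : χ ∈ charAnnihilator H ↔ ∀ h ∈ H, χ h = 1 := by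
  simp [charAnnihilator]

open Classical in
lemma charAnnihilator_eq_image :
    charAnnihilator H =
      univ.image fun θ : AddChar (G ⧸ H) ℂ => θ.compAddMonoidHom (QuotientAddGroup.mk' H) := by
  ext χ
  simp only [mem_charAnnihilator, mem_image, mem_univ, true_and]
  constructor
  · intro hχ
    refine ⟨AddChar.toAddMonoidHomEquiv.symm
      (QuotientAddGroup.lift H (AddChar.toAddMonoidHomEquiv χ) hχ), ?_⟩
    ext a
    rfl
  · rintro ⟨θ, rfl⟩ h hh
    simp [(QuotientAddGroup.eq_zero_iff h).2 hh]

open Classical in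
lemma sum_charAnnihilator_apply (a : G) :
    ∑ χ ∈ charAnnihilator H, χ a = if a ∈ H then (H.index : ℂ) else 0 := by
  rw [charAnnihilator_eq_image, sum_image fun _ _ _ _ h => AddChar.compAddMonoidHom_injective_left
    _ (QuotientAddGroup.mk'_surjective H) h]
  simp [AddChar.sum_apply_eq_ite, AddSubgroup.index_eq_card]

lemma wInner_translate_translate (a b : G) (f g : G → ℂ) :
    ⟪τ a f, τ b g⟫_[ℂ] = ⟪f, τ (b - a) g⟫_[ℂ] := by
  simp only [RCLike.wInner_one_eq_sum]
  exact Fintype.sum_equiv (Equiv.subRight a) _ _ fun x => by simp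

lemma wInner_addChar_mul_conj (χ : AddChar G ℂ) (f g : G → ℂ) :
    ⟪⇑χ, f⟫_[ℂ] * conj ⟪⇑χ, g⟫_[ℂ] = ∑ a, χ a * ⟪g, τ a f⟫_[ℂ] := by
  calc ⟪⇑χ, f⟫_[ℂ] * conj ⟪⇑χ, g⟫_[ℂ]
      = ∑ t, ∑ s, χ (t - s) * (f s * conj (g t)) := by
        rw [RCLike.conj_wInner_symm, RCLike.wInner_one_eq_sum, RCLike.wInner_one_eq_sum,
          sum_mul_sum, sum_comm]
        simp only [RCLike.inner_apply, sub_eq_add_neg, AddChar.map_add_eq_mul,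
          AddChar.map_neg_eq_conj]
        exact sum_congr rfl fun t _ => sum_congr rfl fun s _ => by ring
    _ = ∑ t, ∑ a, χ a * (τ a f t * conj (g t)) :=
        sum_congr rfl fun t _ => Fintype.sum_equiv (Equiv.subLeft t) _ _ fun s => by simp
    _ = ∑ a, χ a * ⟪g, τ a f⟫_[ℂ] := by
        rw [sum_comm]
        simp only [RCLike.wInner_one_eq_sum, RCLike.inner_apply, mul_sum]

/-- The bracket product of `f` and `g`: the `H^⊥`-periodization of `f̂ * conj ĝ`, where the Fourier
coefficient `f̂(χ)` is written as `⟪χ, f⟫_[ℂ]`. -/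
noncomputable def bracket (f g : G → ℂ) (ψ : AddChar G ℂ) : ℂ :=
  ∑ χ ∈ charAnnihilator H, ⟪⇑(ψ + χ), f⟫_[ℂ] * conj ⟪⇑(ψ + χ), g⟫_[ℂ]

lemma conj_bracket (f g : G → ℂ) (ψ : AddChar G ℂ) :
    conj (bracket H f g ψ) = bracket H g f ψ := by
  simp only [bracket, map_sum, map_mul, Complex.conj_conj, mul_comm]

lemma forall_bracket_eq_iff_forall_le {P : Type*} [LinearOrder P] (φ : P → G → ℂ) (q : ℕ)
    (ψ : AddChar G ℂ) :
    (∀ p₁ p₂, bracket H (φ p₁) (φ p₂) ψ = if p₁ = p₂ then (q : ℂ) else 0) ↔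
      ∀ p₁ p₂, p₁ ≤ p₂ → bracket H (φ p₁) (φ p₂) ψ = if p₁ = p₂ then (q : ℂ) else 0 := by
  refine ⟨fun h p₁ p₂ _ => h p₁ p₂, fun h p₁ p₂ => ?_⟩
  obtain hle | hle := le_total p₁ p₂
  · exact h p₁ p₂ hle
  · rw [← conj_bracket, h p₂ p₁ hle, apply_ite conj, map_natCast, map_zero]
    simp only [eq_comm]

lemma bracket_eq_index_mul_sum (f g : G → ℂ) (ψ : AddChar G ℂ) :
    bracket H f g ψ =
      H.index * ∑ a, ψ a * (H : Set G).indicator (fun a => ⟪g, τ a f⟫_[ℂ]) a := by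
  classical
  calc bracket H f g ψ
      = ∑ a, ψ a * ⟪g, τ a f⟫_[ℂ] * ∑ χ ∈ charAnnihilator H, χ a := by
        simp only [bracket, wInner_addChar_mul_conj, AddChar.add_apply, mul_sum]
        rw [sum_comm]
        simp only [mul_right_comm]
    _ = H.index * ∑ a, ψ a * (H : Set G).indicator (fun a => ⟪g, τ a f⟫_[ℂ]) a := by
        rw [mul_sum]
        refine sum_congr rfl fun a _ => ?_
        rw [sum_charAnnihilator_apply, Set.indicator_apply, SetLike.mem_coe]
        split_ifs <;> ring

variable [DecidableEq G]

lemma forall_sum_addChar_mul_eq_iff (c : G → ℂ) (z : ℂ) :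
    (∀ ψ : AddChar G ℂ, ∑ a, ψ a * c a = z) ↔ c = Pi.single 0 z := by
  refine ⟨fun h => ?_, fun h ψ => by simp [h, Pi.single_apply]⟩
  have hfun : Fintype.linearCombination ℂ c = Fintype.linearCombination ℂ (Pi.single 0 z) :=
    (AddChar.complexBasis G).ext fun ψ => by
      simp [Fintype.linearCombination_apply, h, Pi.single_apply]
  ext a
  simpa using LinearMap.congr_fun hfun (Pi.single a 1)

lemma forall_bracket_eq_iff (f g : G → ℂ) (z : ℂ) :
    (∀ ψ, bracket H f g ψ = H.index * z) ↔
      ∀ a ∈ H, ⟪g, τ a f⟫_[ℂ] = if a = 0 then z else 0 := by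
  have hindex : (H.index : ℂ) ≠ 0 := Nat.cast_ne_zero.2 H.index_ne_zero_of_finite
  simp only [bracket_eq_index_mul_sum, mul_right_inj' hindex, forall_sum_addChar_mul_eq_iff,
    funext_iff, Pi.single_apply]
  refine forall_congr' fun a => ?_
  by_cases ha : a ∈ H
  · simp [ha]
  · have ha0 : a ≠ 0 := fun h => ha (h ▸ H.zero_mem)
    simp [ha, ha0]

variable {P : Type*} [Fintype P] [DecidableEq P]

theorem isOrthonormalBasis_translate_iff (hP : Fintype.card P = H.index) (φ : P → G → ℂ) :
    IsOrthonormalBasis (fun i : H × P => τ (i.1 : G) (φ i.2)) ↔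
      ∀ ψ p₁ p₂, bracket H (φ p₁) (φ p₂) ψ = if p₁ = p₂ then (H.index : ℂ) else 0 := by
  classical
  have hcard : Fintype.card (H × P) = Fintype.card G := by
    rw [Fintype.card_prod, hP, ← Nat.card_eq_fintype_card, ← Nat.card_eq_fintype_card,
      H.card_mul_index]
  have hbracket : (∀ ψ p₁ p₂, bracket H (φ p₁) (φ p₂) ψ = if p₁ = p₂ then (H.index : ℂ) else 0) ↔
      ∀ p₁ p₂, ∀ a ∈ H, ⟪φ p₂, τ a (φ p₁)⟫_[ℂ] =
        if a = 0 then if p₁ = p₂ then 1 else 0 else 0 := by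
    simp only [← forall_bracket_eq_iff, mul_ite, mul_one, mul_zero]
    exact ⟨fun h p₁ p₂ ψ => h ψ p₁ p₂, fun h ψ p₁ p₂ => h p₁ p₂ ψ⟩
  rw [isOrthonormalBasis_iff_of_card_eq hcard, hbracket]
  simp only [wInner_translate_translate]
  constructor
  · intro h p₁ p₂ a ha
    simpa [Prod.ext_iff, ite_and, Subtype.ext_iff, eq_comm] using h (0, p₂) (⟨a, ha⟩, p₁)
  · rintro h ⟨⟨a, ha⟩, p₂⟩ ⟨⟨b, hb⟩, p₁⟩
    simpa [ite_and, sub_eq_zero, eq_comm] using h p₁ p₂ (b - a) (H.sub_mem hb ha)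

end Bracket

section IntegerMatrices

variable {n : Type*}

/-- Coordinatewise reduction `ℤⁿ → (ℤ/Nℤ)ⁿ`. -/
def reduceMod (N : ℕ) : (n → ℤ) →+ (n → ZMod N) :=
  (Int.castAddHom (ZMod N)).compLeft n

lemma reduceMod_surjective (N : ℕ) :
    Function.Surjective (reduceMod N : (n → ℤ) →+ (n → ZMod N)) :=
  ZMod.intCast_surjective.comp_left

lemma reduceMod_eq_zero_iff {N : ℕ} {v : n → ℤ} :
    reduceMod N v = 0 ↔ ∃ w, (N : ℤ) • w = v := by
  simp only [reduceMod, funext_iff, AddMonoidHom.compLeft_apply, Function.comp_apply,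
    Int.coe_castAddHom, Pi.zero_apply, ZMod.intCast_zmod_eq_zero_iff_dvd, dvd_def,
    Classical.skolem, Pi.smul_apply, smul_eq_mul, eq_comm]

variable [Fintype n]

/-- The endomorphism `Ā` of `(ℤ/Nℤ)ⁿ` induced by an integer matrix `A`. -/
def mulVecMod (N : ℕ) (A : Matrix n n ℤ) : (n → ZMod N) →+ (n → ZMod N) :=
  (A.map (Int.cast : ℤ → ZMod N)).mulVecLin.toAddMonoidHom

lemma mulVecMod_reduceMod (N : ℕ) (A : Matrix n n ℤ) (v : n → ℤ) :
    mulVecMod N A (reduceMod N v) = reduceMod N (A *ᵥ v) := by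
  ext i
  simp [mulVecMod, reduceMod, mulVec, dotProduct]

lemma dotProduct_mulVecMod (N : ℕ) (A : Matrix n n ℤ) (u v : n → ZMod N) :
    u ⬝ᵥ mulVecMod N A v = mulVecMod N Aᵀ u ⬝ᵥ v := by
  simp [mulVecMod, dotProduct_mulVec, transpose_map]

lemma index_range_eq_natAbs_det {M : Type*} [AddCommGroup M] [Module.Free ℤ M]
    [Module.Finite ℤ M] {f : M →ₗ[ℤ] M} (hf : Function.Injective f) :
    f.toAddMonoidHom.range.index = (LinearMap.det f).natAbs :=
  (Submodule.natAbs_det_equiv _ (LinearEquiv.ofInjective f hf)).symm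

variable [DecidableEq n]

lemma det_ne_zero_of_mul_eq_smul_one {R : Type*} [CommRing R] [IsDomain R] {A B : Matrix n n R}
    {c : R} (hc : c ≠ 0) (h : A * B = c • 1) : A.det ≠ 0 := by
  refine left_ne_zero_of_mul (b := B.det) ?_
  rw [← det_mul, h, det_smul, det_one, mul_one]
  exact pow_ne_zero _ hc

lemma mul_eq_smul_one_symm {R : Type*} [CommRing R] [IsDomain R] {A B : Matrix n n R} {c : R}
    (hc : c ≠ 0) (h : A * B = c • 1) : B * A = c • 1 := by
  have hdet : IsRegular A.det := .of_ne_zero (det_ne_zero_of_mul_eq_smul_one hc h)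
  refine (isRegular_of_isLeftRegular_det hdet.left).left ?_
  simp [← Matrix.mul_assoc, h]

variable {N : ℕ} [NeZero N] {A B : Matrix n n ℤ}

lemma reduceMod_mulVec_eq_zero_iff (hAB : A * B = (N : ℤ) • 1) (v : n → ℤ) :
    reduceMod N (A *ᵥ v) = 0 ↔ ∃ w, B *ᵥ w = v := by
  have hinj : Function.Injective A.mulVec := mulVec_injective_of_det_ne_zero
    (det_ne_zero_of_mul_eq_smul_one (NeZero.natCast_ne N ℤ) hAB)
  have hsmul (w : n → ℤ) : (N : ℤ) • w = A *ᵥ (B *ᵥ w) := by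
    rw [mulVec_mulVec, hAB, smul_mulVec, one_mulVec]
  simp only [reduceMod_eq_zero_iff, hsmul, hinj.eq_iff]

lemma ker_mulVecMod (hAB : A * B = (N : ℤ) • 1) :
    (mulVecMod N A).ker = (mulVecMod N B).range := by
  ext u
  obtain ⟨v, rfl⟩ := reduceMod_surjective N u
  rw [AddMonoidHom.mem_ker, AddMonoidHom.mem_range, mulVecMod_reduceMod]
  constructor
  · rw [reduceMod_mulVec_eq_zero_iff hAB]
    rintro ⟨w, rfl⟩
    exact ⟨reduceMod N w, mulVecMod_reduceMod N B w⟩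
  · rintro ⟨x, hx⟩
    obtain ⟨w, rfl⟩ := reduceMod_surjective N x
    rw [← mulVecMod_reduceMod, ← hx, mulVecMod_reduceMod, mulVecMod_reduceMod,
      reduceMod_mulVec_eq_zero_iff hAB]
    exact ⟨w, rfl⟩

lemma index_range_mulVecMod (hAB : A * B = (N : ℤ) • 1) :
    (mulVecMod N A).range.index = A.det.natAbs := by
  have hN : (N : ℤ) ≠ 0 := NeZero.natCast_ne N ℤ
  have hBA := mul_eq_smul_one_symm hN hAB
  have hcomap : (mulVecMod N A).range.comap (reduceMod N) =
      A.mulVecLin.toAddMonoidHom.range := by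
    ext v
    rw [← ker_mulVecMod hBA, AddSubgroup.mem_comap, AddMonoidHom.mem_ker, mulVecMod_reduceMod,
      reduceMod_mulVec_eq_zero_iff hBA]
    rfl
  rw [← AddSubgroup.index_comap_of_surjective _ (reduceMod_surjective N), hcomap,
    index_range_eq_natAbs_det, ← toLin'_apply', LinearMap.det_toLin']
  exact mulVec_injective_of_det_ne_zero (det_ne_zero_of_mul_eq_smul_one hN hAB)

end IntegerMatrices

section DotChar

variable {n : Type*} [Fintype n]

/-- The character `s ↦ exp(2πi⟨m, s⟩/N)` of `(ℤ/Nℤ)ⁿ`, additively in `m`. -/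
noncomputable def dotChar (N : ℕ) [NeZero N] : (n → ZMod N) →+ AddChar (n → ZMod N) ℂ where
  toFun m := ZMod.stdAddChar.compAddMonoidHom (dotProductBilin ℤ ℤ m).toAddMonoidHom
  map_zero' := by ext s; simp
  map_add' m m' := by ext s; simp [AddChar.map_add_eq_mul]

variable {N : ℕ} [NeZero N]

lemma dotChar_apply (m s : n → ZMod N) : dotChar N m s = ZMod.stdAddChar (m ⬝ᵥ s) := rfl

lemma dotChar_apply_eq_one_iff (m s : n → ZMod N) : dotChar N m s = 1 ↔ m ⬝ᵥ s = 0 := by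
  rw [dotChar_apply, ← ZMod.injective_stdAddChar.eq_iff, AddChar.map_zero_eq_one]

lemma dotChar_bijective : Function.Bijective (dotChar N : (n → ZMod N) →+ _) := by
  classical
  rw [Fintype.bijective_iff_injective_and_card]
  refine ⟨(injective_iff_map_eq_zero _).2 fun m hm => ?_, AddChar.card_eq.symm⟩
  refine dotProduct_eq_zero_iff.1 fun s => ?_
  rw [← dotChar_apply_eq_one_iff, hm, AddChar.zero_apply]

variable [DecidableEq n]

lemma dotChar_mem_charAnnihilator_range_iff {A B : Matrix n n ℤ}
    (hBA : B * A = (N : ℤ) • 1) (γ : n → ZMod N) :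
    dotChar N γ ∈ charAnnihilator (mulVecMod N A).range ↔ γ ∈ univ.image (mulVecMod N Bᵀ) := by
  have hT : Aᵀ * Bᵀ = (N : ℤ) • 1 := by rw [← transpose_mul, hBA, transpose_smul, transpose_one]
  calc dotChar N γ ∈ charAnnihilator (mulVecMod N A).range
      ↔ ∀ x, mulVecMod N Aᵀ γ ⬝ᵥ x = 0 := by
        simp [mem_charAnnihilator, dotChar_apply_eq_one_iff, dotProduct_mulVecMod]
    _ ↔ γ ∈ (mulVecMod N Aᵀ).ker := dotProduct_eq_zero_iff
    _ ↔ γ ∈ univ.image (mulVecMod N Bᵀ) := by simp [ker_mulVecMod hT]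

lemma sum_image_mulVecMod_transpose_eq_bracket {A B : Matrix n n ℤ} (hBA : B * A = (N : ℤ) • 1)
    (f g : (n → ZMod N) → ℂ) (k : n → ZMod N) :
    ∑ γ ∈ univ.image (mulVecMod N Bᵀ),
        ⟪⇑(dotChar N (k + γ)), f⟫_[ℂ] * conj ⟪⇑(dotChar N (k + γ)), g⟫_[ℂ] =
      bracket (mulVecMod N A).range f g (dotChar N k) :=
  sum_bijective (dotChar N) dotChar_bijective
    (fun γ => (dotChar_mem_charAnnihilator_range_iff hBA γ).symm) fun γ _ => by rw [map_add]

end DotChar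

lemma bijective_rangeRestrict_of_isComplement_ker {G G' : Type*} [AddGroup G] [AddGroup G']
    {f : G →+ G'} {S : Set G} (hS : AddSubgroup.IsComplement S f.ker) :
    Function.Bijective fun s : S => f.rangeRestrict s :=
  (QuotientAddGroup.quotientKerEquivRange f).bijective.comp
    (AddSubgroup.isComplement_addSubgroup_right_iff_bijective.1 hS)

theorem onws_characterization_general {n : Type*} [Fintype n] [DecidableEq n] (N : ℕ) [NeZero N]
    (A B : Matrix n n ℤ) (hAB : A * B = (N : ℤ) • 1) (D : Finset (n → ZMod N))
    (hD : AddSubgroup.IsComplement (D : Set (n → ZMod N)) (mulVecMod N B).range)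
    (φ : Fin A.det.natAbs → (n → ZMod N) → ℂ) :
    IsOrthonormalBasis (fun kp : D × Fin A.det.natAbs => τ (mulVecMod N A kp.1) (φ kp.2)) ↔
      ∀ k p₁ p₂, p₁ ≤ p₂ →
        ∑ γ ∈ univ.image (mulVecMod N Bᵀ),
            ⟪⇑(dotChar N (k + γ)), φ p₁⟫_[ℂ] * conj ⟪⇑(dotChar N (k + γ)), φ p₂⟫_[ℂ] =
          if p₁ = p₂ then (A.det.natAbs : ℂ) else 0 := by
  have hBA := mul_eq_smul_one_symm (NeZero.natCast_ne N ℤ) hAB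
  have hindex := index_range_mulVecMod hAB
  obtain ⟨e, he⟩ : ∃ e : D ≃ (mulVecMod N A).range, ∀ d, (e d : n → ZMod N) = mulVecMod N A d :=
    ⟨.ofBijective _ (bijective_rangeRestrict_of_isComplement_ker (ker_mulVecMod hAB ▸ hD)),
      fun _ => rfl⟩
  calc IsOrthonormalBasis (fun kp : D × Fin A.det.natAbs => τ (mulVecMod N A kp.1) (φ kp.2))
      ↔ IsOrthonormalBasis fun hp : (mulVecMod N A).range × Fin A.det.natAbs =>
          τ (hp.1 : n → ZMod N) (φ hp.2) := by
        simp only [← isOrthonormalBasis_comp_equiv (e.prodCongr (.refl _)), Function.comp_def,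
          Equiv.prodCongr_apply, Prod.map_fst, Prod.map_snd, Equiv.refl_apply, he]
    _ ↔ ∀ k p₁ p₂, bracket (mulVecMod N A).range (φ p₁) (φ p₂) (dotChar N k) =
          if p₁ = p₂ then (A.det.natAbs : ℂ) else 0 := by
        rw [isOrthonormalBasis_translate_iff _ (by rw [Fintype.card_fin, hindex]), hindex,
          dotChar_bijective.surjective.forall]
    _ ↔ _ := by
        simp only [forall_bracket_eq_iff_forall_le, sum_image_mulVecMod_transpose_eq_bracket hBA]

section Plane

variable {N : ℕ}

lemma IsDigitRep.isComplement {B : Matrix (Fin 2) (Fin 2) ℤ} {D : Finset (Fin 2 → ZMod N)}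
    (hD : IsDigitRep N B D) :
    AddSubgroup.IsComplement (D : Set (Fin 2 → ZMod N)) (mulVecMod N B).range := by
  rw [AddSubgroup.isComplement_iff_existsUnique_neg_add_mem]
  intro v
  obtain ⟨d, ⟨hd, hvd⟩, huniq⟩ := hD.2 v
  simp only [neg_add_eq_sub]
  exact ⟨⟨d, hd⟩, hvd, fun e he => Subtype.ext (huniq e ⟨e.2, he⟩)⟩

variable [NeZero N]

lemma ip_eq_wInner (f g : (Fin 2 → ZMod N) → ℂ) : ip N f g = ⟪g, f⟫_[ℂ] := by
  simp only [ip, RCLike.wInner_one_eq_sum, RCLike.inner_apply]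

lemma isONB_iff_isOrthonormalBasis {ι : Type*} [Fintype ι] [DecidableEq ι]
    (b : ι → (Fin 2 → ZMod N) → ℂ) : IsONB N b ↔ IsOrthonormalBasis b := by
  simp only [IsONB, IsOrthonormalBasis, ip_eq_wInner]
  rw [forall_comm]
  simp only [eq_comm]

lemma dft_eq_wInner (f : (Fin 2 → ZMod N) → ℂ) (m : Fin 2 → ZMod N) :
    dft N f m = ⟪⇑(dotChar N m), f⟫_[ℂ] := by
  rw [RCLike.wInner_one_eq_sum]
  refine sum_congr rfl fun s _ => ?_
  have hcast : -(m ⬝ᵥ s) = ((-(∑ i, ((m i).val : ℤ) * ((s i).val : ℤ)) : ℤ) : ZMod N) := by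
    simp [dotProduct]
  rw [RCLike.inner_apply, ← AddChar.map_neg_eq_conj, dotChar_apply, dotProduct_neg, hcast,
    ZMod.stdAddChar_coe]
  push_cast
  ring_nf

end Plane

/-- Let `q = |det A| ≥ 2`, let `𝔇` be a digit set for `B`, and
`Φ = {φ₀, …, φ_{q−1}} ⊆ ℓ²(ℤ_N²)`.  Then `𝔅(Φ) = {T_{Āk} φ_p : k ∈ 𝔇, 0 ≤ p ≤ q−1}`
is an orthonormal basis of `ℓ²(ℤ_N²)` if and only if for every `k ∈ (ℤ/Nℤ)²` and
all `p₁ ≤ p₂` one has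
`Σ_{γ ∈ C̄((ℤ/Nℤ)²)} φ̂_{p₁}(k+γ)·conj(φ̂_{p₂}(k+γ)) = q·δ_{p₁p₂}`,
where `C = Bᵀ`. -/
theorem onws_characterization (N : ℕ) [NeZero N]
    (A B : Matrix (Fin 2) (Fin 2) ℤ) (hA : A.det ≠ 0)
    (hB : A * B = (N : ℤ) • (1 : Matrix (Fin 2) (Fin 2) ℤ))
    (hq : 2 ≤ A.det.natAbs)
    (D : Finset (Fin 2 → ZMod N)) (hD : IsDigitRep N B D)
    (hinj : Set.InjOn (matBar N A) D)
    (φ : Fin (A.det.natAbs) → ((Fin 2 → ZMod N) → ℂ)) :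
    IsONB N (fun kp : ↥D × Fin (A.det.natAbs) =>
        transl N (matBar N A ↑kp.1) (φ kp.2)) ↔
      ∀ k : Fin 2 → ZMod N, ∀ p₁ p₂ : Fin (A.det.natAbs), p₁ ≤ p₂ →
        ∑ γ ∈ Finset.univ.image (matBar N B.transpose),
            dft N (φ p₁) (k + γ) * (starRingEnd ℂ) (dft N (φ p₂) (k + γ)) =
          if p₁ = p₂ then (A.det.natAbs : ℂ) else 0 := by
  simpa only [isONB_iff_isOrthonormalBasis, dft_eq_wInner] using!
    onws_characterization_general N A B hB D hD.isComplement φ
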